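/- arXiv:2507.04653 — 2 statements merged into one kernel-verified Lean document; each statement's English description precedes it below -/
import Mathlib

section
/- For all positive integers α, m, n, r, the polynomial ∑_{k=1}^{n} k^r·(k+1)^r·(2k+1)·w_k^{(α)}(x)^m in ℤ[x] has all its coefficients divisible by n(n+1)(n+2)/gcd(2,n). -/
open Polynomial

/-- `w(k,j) = C(k-1,j-1)·C(k+j,j) − C(k,j)·C(k+j,j-1)`. -/
def w (k j : ℕ) : ℤ :=
  ((k - 1).choose (j - 1) * (k + j).choose j : ℤ) - (k.choose j * (k + j).choose (j - 1) : ℤ)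

/-- `w_k^{(α)}(x) = ∑_{j=1}^{k} w(k,j)^α x^{j-1}` in `ℤ[x]`. -/
noncomputable def wPoly (α k : ℕ) : Polynomial ℤ :=
  ∑ j ∈ Finset.Icc 1 k, Polynomial.C ((w k j) ^ α) * X ^ (j - 1)

/-!
In terms of `x = k (k + 1)`, the number `w(k, s + 1)` is
`∏_{i=1}^{s} (x - i (i + 1)) / (i (i + 1))`, so the functions `k ↦ w(k, s + 1)` form a Newton
basis of the rational polynomials in `x`. Multiplying by one more factor `x - (s + 1) (s + 2)` at
a time shows that the product of two of them is a combination of others with explicit *integer*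
coefficients. Hence their integer span is a ring. It contains `x = 2 w(k, 1) + 2 w(k, 2)` and the
coefficients of `w_k^{(α)}`, and therefore those of `x ^ (r - 1) (w_k^{(α)}) ^ m`. It remains to
sum `x (2 k + 1)` times a single basis function: this telescopes to `n (n + 1) T` for a product
`T` of two binomial coefficients, and `n + 2` divides `n T`, hence `gcd(n + 2, n) T = gcd(2, n) T`.
-/

section Binomial

variable (n k : ℕ)

lemma cast_choose_succ_mul : (n.choose (k + 1) : ℤ) * (k + 1) = n.choose k * (n - k) := by
  rcases le_or_gt k n with h | h
  · have := Nat.choose_succ_right_eq n k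
    zify [h] at this
    exact this
  · simp [Nat.choose_eq_zero_of_lt h, Nat.choose_eq_zero_of_lt (Nat.lt_succ_of_lt h)]

lemma cast_succ_mul_choose : ((n : ℤ) + 1) * n.choose k = (n + 1).choose (k + 1) * (k + 1) :=
  mod_cast Nat.add_one_mul_choose_eq n k

lemma cast_succ_mul_choose_same :
    ((n : ℤ) + 1) * n.choose k = (n + 1).choose k * (n + 1 - k) := by
  have h := cast_choose_succ_mul (n + 1) k
  push_cast at h
  rw [cast_succ_mul_choose, h]

end Binomial

lemma sum_Icc_one_eq_sum_range {M : Type*} [AddCommMonoid M] (f : ℕ → M) (n : ℕ) :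
    ∑ k ∈ Finset.Icc 1 n, f k = ∑ k ∈ Finset.range n, f (k + 1) := by
  rw [Finset.range_eq_Ico, Finset.sum_Ico_add', zero_add, Finset.Ico_add_one_right_eq_Icc]

lemma sum_range_mul_add_mul_succ {R : Type*} [NonUnitalNonAssocSemiring R] (a b v : ℕ → R)
    {n : ℕ} (ha : a n = 0) :
    ∑ e ∈ Finset.range n, (a e * v e + b e * v (e + 1)) =
      ∑ e ∈ Finset.range n, (a (e + 1) + b e) * v (e + 1) + a 0 * v 0 := by
  have extend : ∑ e ∈ Finset.range n, a e * v e = ∑ e ∈ Finset.range (n + 1), a e * v e := by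
    rw [Finset.sum_range_succ, ha, zero_mul, add_zero]
  rw [Finset.sum_add_distrib, extend, Finset.sum_range_succ', add_right_comm,
    ← Finset.sum_add_distrib]
  simp only [add_mul]

/-- The function `k ↦ w(k, s + 1)` on positive integers, as a sequence in `K = k - 1`; the shift
makes the truncated subtractions in `w` exact. -/
def wSeq (s K : ℕ) : ℤ := w (K + 1) (s + 1)

lemma add_two_mul_wSeq (s K : ℕ) :
    ((K : ℤ) + 2) * wSeq s K = K.choose s * (K + s + 2).choose (s + 1) := by
  have absorb := cast_succ_mul_choose K s
  have lower := cast_choose_succ_mul (K + s + 2) s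
  rw [wSeq, w, show K + 1 + (s + 1) = K + s + 2 by omega]
  simp only [Nat.add_sub_cancel]
  push_cast at lower
  linear_combination ((K + s + 2).choose (s + 1) : ℤ) * absorb
    + ((K + 1).choose (s + 1) : ℤ) * lower

lemma wSeq_zero : wSeq 0 = 1 := by
  ext K
  have ne_zero : (K : ℤ) + 2 ≠ 0 := by positivity
  apply mul_left_cancel₀ ne_zero
  simp [add_two_mul_wSeq]

lemma wSeq_eq_zero {s K : ℕ} (h : K < s) : wSeq s K = 0 := by
  simp [wSeq, w, Nat.choose_eq_zero_of_lt h, Nat.choose_eq_zero_of_lt (Nat.succ_lt_succ h)]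

lemma wSeq_succ (s K : ℕ) :
    ((s : ℤ) + 1) * (s + 2) * wSeq (s + 1) K =
      ((K + 1) * (K + 2) - (s + 1) * (s + 2)) * wSeq s K := by
  have ne_zero : (K : ℤ) + 2 ≠ 0 := by positivity
  have closed := add_two_mul_wSeq s K
  have closed_succ := add_two_mul_wSeq (s + 1) K
  have lower := cast_choose_succ_mul K s
  have absorb := cast_succ_mul_choose (K + s + 2) (s + 1)
  rw [show K + (s + 1) + 2 = K + s + 2 + 1 by omega] at closed_succ
  push_cast at absorb
  apply mul_left_cancel₀ ne_zero
  linear_combination ((s : ℤ) + 1) * (s + 2) * closed_succ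
    - ((K + 1 : ℤ) * (K + 2) - (s + 1) * (s + 2)) * closed
    + ((K + s + 2 + 1).choose (s + 2) : ℤ) * (s + 2) * lower - (K.choose s : ℤ) * (K - s) * absorb

/-- The coefficient of `wSeq (t + e)` in the product `wSeq s * wSeq t`. Its value is
`C(s+t+2, s+1) C(t+e, s) C(s, e) / (t+e+2)`; the difference makes it visibly an integer. -/
def wMulCoeff (s t e : ℕ) : ℤ :=
  (s + t + 2).choose (s + 1) * (t + e).choose s * s.choose e -
    (s + t + 2).choose (t + e + 2) * (t + e + 1).choose e * (t + e + 1).choose (s + 1)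

lemma add_two_mul_choose_mul_choose (s t e : ℕ) :
    ((t : ℤ) + e + 2) * ((s + t + 2).choose (t + e + 2) * (t + e + 1).choose e) =
      (s + 1) * ((s + t + 2).choose (s + 1) * s.choose e) := by
  have trinomial : ((s + t + 2).choose (t + e + 2) : ℤ) * (t + e + 2).choose (t + 1) =
      (s + t + 2).choose (t + 1) * (s + 1).choose (e + 1) := by
    have := Nat.choose_mul (n := s + t + 2) (show t + 1 ≤ t + e + 2 by omega)
    rw [show s + t + 2 - (t + 1) = s + 1 by omega,
      show t + e + 2 - (t + 1) = e + 1 by omega] at this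
    exact_mod_cast this
  rw [Nat.choose_symm_of_eq_add (show t + e + 2 = t + 1 + (e + 1) by omega),
    Nat.choose_symm_of_eq_add (show s + t + 2 = t + 1 + (s + 1) by omega)] at trinomial
  have absorb_top := cast_succ_mul_choose (t + e + 1) e
  have absorb_s := cast_succ_mul_choose s e
  push_cast at absorb_top
  linear_combination ((e : ℤ) + 1) * trinomial + ((s + t + 2).choose (t + e + 2) : ℤ) * absorb_top
    - ((s + t + 2).choose (s + 1) : ℤ) * absorb_s

lemma add_two_mul_wMulCoeff (s t e : ℕ) :
    ((t : ℤ) + e + 2) * wMulCoeff s t e =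
      (s + t + 2).choose (s + 1) * (t + e).choose s * s.choose e := by
  have transfer := add_two_mul_choose_mul_choose s t e
  have absorb := cast_succ_mul_choose (t + e) s
  push_cast at absorb
  rw [wMulCoeff]
  linear_combination -((t + e + 1).choose (s + 1) : ℤ) * transfer
    + ((s + t + 2).choose (s + 1) * s.choose e : ℤ) * absorb

lemma wMulCoeff_eq_zero {s e : ℕ} (t : ℕ) (h : s < e) : wMulCoeff s t e = 0 := by
  simp [wMulCoeff, Nat.choose_eq_zero_of_lt h,
    Nat.choose_eq_zero_of_lt (show s + t + 2 < t + e + 2 by omega)]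

lemma wMulCoeff_zero_zero (t : ℕ) : wMulCoeff 0 t 0 = 1 := by
  simp [wMulCoeff]

lemma choose_add_succ_mul (s t : ℕ) :
    ((s + 1 + t + 2).choose (s + 1 + 1) : ℤ) * (s + 2) =
      (s + t + 3) * (s + t + 2).choose (s + 1) := by
  have h := cast_succ_mul_choose (s + t + 2) (s + 1)
  rw [show s + 1 + t + 2 = s + t + 2 + 1 by omega]
  push_cast at h
  linear_combination -h

lemma wMulCoeff_succ_zero (s t : ℕ) :
    ((s : ℤ) + 1) * (s + 2) * wMulCoeff (s + 1) t 0 =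
      ((t + 1) * (t + 2) - (s + 1) * (s + 2)) * wMulCoeff s t 0 := by
  have ne_zero : (t : ℤ) + 2 ≠ 0 := by positivity
  have closed := add_two_mul_wMulCoeff s t 0
  have closed_succ := add_two_mul_wMulCoeff (s + 1) t 0
  have lower := cast_choose_succ_mul t s
  have central := choose_add_succ_mul s t
  simp only [Nat.choose_zero_right, Nat.cast_zero, Nat.cast_one, add_zero, mul_one]
    at closed closed_succ
  apply mul_left_cancel₀ ne_zero
  linear_combination ((s : ℤ) + 1) * (s + 2) * closed_succ
    - ((t + 1 : ℤ) * (t + 2) - (s + 1) * (s + 2)) * closed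
    + ((s : ℤ) + 1) * t.choose (s + 1) * central
    + ((s : ℤ) + t + 3) * (s + t + 2).choose (s + 1) * lower

lemma wMulCoeff_succ_succ (s t e : ℕ) :
    ((s : ℤ) + 1) * (s + 2) * wMulCoeff (s + 1) t (e + 1) =
      ((t + e + 2) * (t + e + 3) - (s + 1) * (s + 2)) * wMulCoeff s t (e + 1)
        + (t + e + 1) * (t + e + 2) * wMulCoeff s t e := by
  have ne_zero : (t : ℤ) + e + 3 ≠ 0 := by positivity
  have closed_prev := add_two_mul_wMulCoeff s t e
  have closed := add_two_mul_wMulCoeff s t (e + 1)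
  have closed_succ := add_two_mul_wMulCoeff (s + 1) t (e + 1)
  have central := choose_add_succ_mul s t
  have lower_top := cast_choose_succ_mul (t + e + 1) s
  have absorb_same := cast_succ_mul_choose_same (t + e) s
  have lower_s := cast_choose_succ_mul s e
  rw [← add_assoc t e 1] at closed closed_succ
  rw [Nat.choose_succ_succ' s e] at closed_succ
  push_cast at closed_prev closed closed_succ lower_top absorb_same
  set A : ℤ := ((s + t + 2).choose (s + 1) : ℤ)
  set B : ℤ := ((t + e + 1).choose s : ℤ)
  set p : ℤ := (s.choose e : ℤ)
  set q : ℤ := (s.choose (e + 1) : ℤ)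
  apply mul_left_cancel₀ ne_zero
  linear_combination ((s : ℤ) + 1) * (s + 2) * closed_succ
    - ((t + e + 2 : ℤ) * (t + e + 3) - (s + 1) * (s + 2)) * closed
    - ((t : ℤ) + e + 3) * (t + e + 1) * closed_prev
    + ((s : ℤ) + 1) * (t + e + 1).choose (s + 1) * (p + q) * central
    + ((s : ℤ) + t + 3) * A * (p + q) * lower_top
    - ((t : ℤ) + e + 3) * A * p * absorb_same
    - A * B * (t + e + 1 - s) * lower_s

lemma wSeq_mul_wSeq_apply (s t K : ℕ) :
    wSeq s K * wSeq t K = ∑ e ∈ Finset.range (s + 1), wMulCoeff s t e * wSeq (t + e) K := by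
  induction s with
  | zero => simp [wSeq_zero, wMulCoeff_zero_zero]
  | succ s ih =>
    have ne_zero : ((s : ℤ) + 1) * (s + 2) ≠ 0 := by positivity
    let keep (e : ℕ) : ℤ := ((t + e + 1) * (t + e + 2) - (s + 1) * (s + 2)) * wMulCoeff s t e
    let raise (e : ℕ) : ℤ := (t + e + 1) * (t + e + 2) * wMulCoeff s t e
    have keep_last : keep (s + 1) = 0 := by
      simp [keep, wMulCoeff_eq_zero t (Nat.lt_succ_self s)]
    have mul_term (e : ℕ) :
        ((K + 1) * (K + 2) - (s + 1) * (s + 2)) * (wMulCoeff s t e * wSeq (t + e) K) =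
          keep e * wSeq (t + e) K + raise e * wSeq (t + (e + 1)) K := by
      have raise_index := wSeq_succ (t + e) K
      push_cast at raise_index
      linear_combination -wMulCoeff s t e * raise_index
    have coeff_zero : keep 0 = (s + 1) * (s + 2) * wMulCoeff (s + 1) t 0 := by
      simp [keep, wMulCoeff_succ_zero]
    have coeff_succ (e : ℕ) :
        keep (e + 1) + raise e = (s + 1) * (s + 2) * wMulCoeff (s + 1) t (e + 1) := by
      rw [wMulCoeff_succ_succ]
      simp only [keep, raise]
      push_cast
      ring
    apply mul_left_cancel₀ ne_zero
    rw [← mul_assoc, wSeq_succ, mul_assoc, ih, Finset.mul_sum,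
      Finset.sum_congr rfl fun e _ => mul_term e,
      sum_range_mul_add_mul_succ keep raise (fun e => wSeq (t + e) K) keep_last,
      Finset.sum_range_succ' _ (s + 1), mul_add, Finset.mul_sum]
    simp only [coeff_zero, coeff_succ, mul_assoc]

lemma wSeq_mul_wSeq (s t : ℕ) :
    wSeq s * wSeq t = ∑ e ∈ Finset.range (s + 1), wMulCoeff s t e • wSeq (t + e) := by
  ext K
  simp [wSeq_mul_wSeq_apply, Finset.sum_apply]

lemma span_wSeq_mul_le :
    Submodule.span ℤ (Set.range wSeq) * Submodule.span ℤ (Set.range wSeq) ≤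
      Submodule.span ℤ (Set.range wSeq) := by
  rw [Submodule.span_mul_span, Submodule.span_le]
  rintro _ ⟨_, ⟨s, rfl⟩, _, ⟨t, rfl⟩, rfl⟩
  change wSeq s * wSeq t ∈ Submodule.span ℤ (Set.range wSeq)
  rw [wSeq_mul_wSeq]
  exact Submodule.sum_mem _ fun e _ =>
    Submodule.smul_mem _ _ (Submodule.subset_span ⟨t + e, rfl⟩)

/-- The ring of integer combinations of the sequences `wSeq s`. -/
def wAlgebra : Subalgebra ℤ (ℕ → ℤ) :=
  (Submodule.span ℤ (Set.range wSeq)).toSubalgebra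
    (Submodule.subset_span ⟨0, wSeq_zero⟩)
    fun _ _ hf hg => span_wSeq_mul_le (Submodule.mul_mem_mul hf hg)

lemma wSeq_mem_wAlgebra (s : ℕ) : wSeq s ∈ wAlgebra :=
  Submodule.subset_span ⟨s, rfl⟩

lemma consecutive_mul_mem_wAlgebra : (fun K : ℕ => ((K : ℤ) + 1) * (K + 2)) ∈ wAlgebra := by
  have : (fun K : ℕ => ((K : ℤ) + 1) * (K + 2)) = (2 : ℤ) • wSeq 0 + (2 : ℤ) • wSeq 1 := by
    ext K
    have h := wSeq_succ 0 K
    simp only [wSeq_zero, zero_add, Pi.one_apply, mul_one, one_mul, Nat.cast_zero] at h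
    simp only [wSeq_zero, Pi.add_apply, Pi.smul_apply, Pi.one_apply, smul_eq_mul]
    linear_combination -h
  rw [this]
  exact add_mem (wAlgebra.smul_mem (wSeq_mem_wAlgebra 0) 2)
    (wAlgebra.smul_mem (wSeq_mem_wAlgebra 1) 2)

lemma coeff_wPoly_succ {α : ℕ} (hα : α ≠ 0) (K i : ℕ) :
    (wPoly α (K + 1)).coeff i = wSeq i K ^ α := by
  have h : (wPoly α (K + 1)).coeff i = if i < K + 1 then wSeq i K ^ α else 0 := by
    rw [wPoly, sum_Icc_one_eq_sum_range, finsetSum_coeff]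
    simp only [coeff_C_mul, coeff_X_pow, Nat.add_sub_cancel]
    simp [wSeq]
  rw [h, ite_eq_left_iff]
  intro hi
  rw [wSeq_eq_zero (by omega), zero_pow hα]

lemma coeff_pow_mem_subalgebra {ι R : Type*} [CommSemiring R] (A : Subalgebra R (ι → R))
    {P : ι → R[X]} (hP : ∀ i, (fun k => (P k).coeff i) ∈ A) (m i : ℕ) :
    (fun k => (P k ^ m).coeff i) ∈ A := by
  induction m generalizing i with
  | zero =>
    simp only [pow_zero, coeff_one]
    exact A.algebraMap_mem (if i = 0 then 1 else 0)
  | succ m ih =>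
    have : (fun k => (P k ^ (m + 1)).coeff i) = ∑ p ∈ Finset.HasAntidiagonal.antidiagonal i,
        (fun k => (P k ^ m).coeff p.1) * fun k => (P k).coeff p.2 := by
      ext k
      simp [pow_succ, coeff_mul, Finset.sum_apply]
    rw [this]
    exact sum_mem fun p _ => mul_mem (ih p.1) (hP p.2)

lemma coeff_wPoly_pow_mem {α : ℕ} (hα : α ≠ 0) (m i : ℕ) :
    (fun K => (wPoly α (K + 1) ^ m).coeff i) ∈ wAlgebra := by
  refine coeff_pow_mem_subalgebra wAlgebra (fun j => ?_) m i
  simp only [coeff_wPoly_succ hα]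
  exact pow_mem (wSeq_mem_wAlgebra j) α

lemma sum_mul_wSeq (s n : ℕ) :
    ∑ K ∈ Finset.range (n + 1), ((K : ℤ) + 1) * (K + 2) * (2 * K + 3) * wSeq s K =
      (n + 1) * (n + 2) * (n.choose s * (n + s + 3).choose (s + 2)) := by
  induction n with
  | zero =>
    cases s with
    | zero => simp [wSeq_zero]
    | succ s => simp [wSeq_eq_zero]
  | succ n ih =>
    have closed := add_two_mul_wSeq s (n + 1)
    have absorb_same := cast_succ_mul_choose_same n s
    have lower := cast_choose_succ_mul (n + s + 3) (s + 1)
    have pascal := Nat.choose_succ_succ' (n + s + 3) (s + 1)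
    rw [Finset.sum_range_succ, ih, show n + 1 + s + 3 = n + s + 3 + 1 by omega, pascal]
    rw [show n + 1 + s + 2 = n + s + 3 by omega] at closed
    push_cast at closed lower ⊢
    linear_combination ((n : ℤ) + 2) * (2 * n + 5) * closed
      + ((n : ℤ) + 2) * (n + s + 3).choose (s + 2) * absorb_same
      - ((n : ℤ) + 2) * (n + 1).choose s * lower

lemma add_three_dvd_succ_mul_choose_mul_choose (n s : ℕ) :
    n + 3 ∣ (n + 1) * (n.choose s * (n + s + 3).choose (s + 2)) := by
  refine ⟨(n + 2).choose (s + 2) * (n + s + 3).choose s, ?_⟩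
  have absorb := cast_succ_mul_choose n s
  have absorb_succ := cast_succ_mul_choose (n + 1) (s + 1)
  have lower := cast_choose_succ_mul (n + s + 3) s
  have lower_succ := cast_choose_succ_mul (n + s + 3) (s + 1)
  have ne_zero : (s : ℤ) + 2 ≠ 0 := by positivity
  zify
  push_cast at absorb_succ lower lower_succ
  apply mul_left_cancel₀ ne_zero
  linear_combination ((s : ℤ) + 2) * (n + s + 3).choose (s + 2) * absorb
    + ((n + 1).choose (s + 1) : ℤ) * (s + 1) * lower_succ
    + ((n + 1).choose (s + 1) : ℤ) * (n + 2) * lower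
    + ((n : ℤ) + 3) * (n + s + 3).choose s * absorb_succ

lemma div_gcd_dvd_mul_choose_mul_choose (n s : ℕ) :
    (n + 1) * (n + 2) * (n + 3) / Nat.gcd 2 (n + 1) ∣
      (n + 1) * (n + 2) * (n.choose s * (n + s + 3).choose (s + 2)) := by
  have gcd_eq : Nat.gcd (n + 3) (n + 1) = Nat.gcd 2 (n + 1) := by
    rw [show n + 3 = 2 + (n + 1) by omega, Nat.gcd_add_self_left]
  have gcd_dvd : Nat.gcd 2 (n + 1) ∣ n + 3 := gcd_eq ▸ Nat.gcd_dvd_left _ _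
  rw [Nat.mul_div_assoc _ gcd_dvd]
  refine mul_dvd_mul_left _ ((Nat.div_dvd_iff_dvd_mul gcd_dvd (by positivity)).2 ?_)
  rw [← gcd_eq, Nat.dvd_gcd_mul_iff_dvd_mul]
  exact add_three_dvd_succ_mul_choose_mul_choose n s

lemma dvd_sum_of_mem_wAlgebra (n : ℕ) {f : ℕ → ℤ} (hf : f ∈ wAlgebra) :
    (((n + 1) * (n + 2) * (n + 3) / Nat.gcd 2 (n + 1) : ℕ) : ℤ) ∣
      ∑ K ∈ Finset.range (n + 1), ((K : ℤ) + 1) * (K + 2) * (2 * K + 3) * f K := by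
  replace hf : f ∈ Submodule.span ℤ (Set.range wSeq) := hf
  induction hf using Submodule.span_induction with
  | mem f hf =>
    obtain ⟨s, rfl⟩ := hf
    rw [sum_mul_wSeq]
    exact_mod_cast div_gcd_dvd_mul_choose_mul_choose n s
  | zero => simp
  | add f g _ _ hf hg =>
    simp only [Pi.add_apply, mul_add _ (f _) (g _), Finset.sum_add_distrib]
    exact dvd_add hf hg
  | smul c f _ hf =>
    simp only [Pi.smul_apply, smul_eq_mul, mul_left_comm _ c, ← Finset.mul_sum]
    exact hf.mul_left c

/-- For all positive integers `α, m, n, r`, every coefficient of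
`∑_{k=1}^{n} k^r (k+1)^r (2k+1) w_k^{(α)}(x)^m` is divisible by
`n(n+1)(n+2)/gcd(2,n)`. -/
theorem coeff_dvd_sum (α m n r : ℕ) (hα : 1 ≤ α) (hm : 1 ≤ m) (hn : 1 ≤ n) (hr : 1 ≤ r) :
    ∀ i : ℕ, ((n * (n + 1) * (n + 2) / Nat.gcd 2 n : ℕ) : ℤ) ∣
      (∑ k ∈ Finset.Icc 1 n,
          ((k : ℤ) ^ r * ((k : ℤ) + 1) ^ r * (2 * (k : ℤ) + 1)) • (wPoly α k) ^ m).coeff i := by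
  intro i
  obtain ⟨n, rfl⟩ := Nat.exists_eq_add_of_le' hn
  obtain ⟨r, rfl⟩ := Nat.exists_eq_add_of_le' hr
  have h := dvd_sum_of_mem_wAlgebra n <|
    mul_mem (pow_mem consecutive_mul_mem_wAlgebra r)
      (coeff_wPoly_pow_mem (Nat.one_le_iff_ne_zero.1 hα) m i)
  convert h using 1
  rw [sum_Icc_one_eq_sum_range, finsetSum_coeff]
  refine Finset.sum_congr rfl fun K _ => ?_
  simp only [coeff_smul, Pi.mul_apply, Pi.pow_apply, smul_eq_mul]
  push_cast
  rw [mul_pow]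
  ring
end

section
/- For all positive integers α, m, n, r, the polynomial n(n+1)(n+2)/gcd(2,n) divides 2·∑_{k=1}^{n} k(k+1)(k+2)·(w_k^{(α)}(x)·w_{k+1}^{(α)}(x))^m in ℤ[x], i.e., 2(2,n)/(n(n+1)(n+2)) times this sum lies in ℤ[x]. -/
open Polynomial

/-!
Replace `w(k,j)` by a `q`-analogue and `2k(k+1)(k+2)` by `[k][2k+2][k+2]`, and let `ζ` be a
primitive `d`-th root of unity with `1 < d ∣ N`. By the `q`-Lucas theorem, the `q`-analogue of
`w_k` at `q = ζ` is, after normalisation by a power of `ζ`, invariant under the reflection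
`da + b ↦ da + (d - 1 - b)`. Hence `w_k w_{k+1}` is invariant under `da + b ↦ da + (d - 2 - b)`,
while the weight changes sign (and vanishes at `b = d - 1`), so the sum over `k < N` vanishes at
`ζ`. Each coefficient of this sum is therefore divisible by every cyclotomic polynomial `Φ_d` with
`1 < d ∣ N`, hence by their product `[N]`, as a polynomial in `q`. At `q = 1`, this says that `N`
divides twice the sum of `k(k+1)(k+2)(w_k w_{k+1})^m` over `k < N`; taking `N = n`, `n + 1` and
`n + 2` gives the theorem.
-/

section QBinomial

variable {R S : Type*} [CommRing R] [CommRing S]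

/-- The `q`-integer `[n] = 1 + q + ⋯ + q^(n-1)`, as a geometric sum so that it makes sense for
every `q`, in particular `q = 1`. -/
def qInt (q : R) (n : ℕ) : R := ∑ i ∈ Finset.range n, q ^ i

/-- The `q`-binomial coefficient, defined by the `q`-Pascal recursion so that it makes sense when
`q` is a root of unity. -/
def qChoose (q : R) : ℕ → ℕ → R
  | _, 0 => 1
  | 0, _ + 1 => 0
  | n + 1, k + 1 => qChoose q n k + q ^ (k + 1) * qChoose q n (k + 1)

@[simp] lemma qInt_zero (q : R) : qInt q 0 = 0 := by simp [qInt]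

@[simp] lemma qInt_one_right (q : R) : qInt q 1 = 1 := by simp [qInt]

@[simp] lemma qInt_one_left (n : ℕ) : qInt (1 : R) n = n := by simp [qInt]

lemma qInt_add (q : R) (m n : ℕ) : qInt q (m + n) = qInt q m + q ^ m * qInt q n := by
  simp [qInt, Finset.sum_range_add, Finset.mul_sum, pow_add]

lemma qInt_mul_sub_one (q : R) (n : ℕ) : qInt q n * (q - 1) = q ^ n - 1 := geom_sum_mul q n

lemma pow_eq_one_of_qInt_eq_zero {q : R} {n : ℕ} (h : qInt q n = 0) : q ^ n = 1 := by
  rw [← sub_eq_zero, ← qInt_mul_sub_one, h, zero_mul]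

lemma qInt_eq_neg_of_qInt_add_eq_zero {q : R} {m n : ℕ} (h : qInt q (m + n) = 0) :
    qInt q m = -(q ^ m * qInt q n) :=
  eq_neg_of_add_eq_zero_left (qInt_add q m n ▸ h)

lemma map_qInt (f : R →+* S) (q : R) (n : ℕ) : f (qInt q n) = qInt (f q) n := by
  simp [qInt]

@[simp] lemma qChoose_zero_right (q : R) (n : ℕ) : qChoose q n 0 = 1 := by
  cases n <;> rfl

@[simp] lemma qChoose_zero_succ (q : R) (k : ℕ) : qChoose q 0 (k + 1) = 0 := rfl

lemma qChoose_succ_succ (q : R) (n k : ℕ) :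
    qChoose q (n + 1) (k + 1) = qChoose q n k + q ^ (k + 1) * qChoose q n (k + 1) := rfl

lemma map_qChoose (f : R →+* S) (q : R) (n k : ℕ) :
    f (qChoose q n k) = qChoose (f q) n k := by
  induction n generalizing k with
  | zero => cases k <;> simp
  | succ n ih => cases k <;> simp [qChoose_succ_succ, ih]

lemma qChoose_one_left (n k : ℕ) : qChoose (1 : R) n k = n.choose k := by
  induction n generalizing k with
  | zero => cases k <;> simp
  | succ n ih => cases k <;> simp [qChoose_succ_succ, ih, Nat.choose_succ_succ]

lemma qChoose_eq_zero_of_lt (q : R) {n k : ℕ} (h : n < k) : qChoose q n k = 0 := by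
  induction n generalizing k with
  | zero => cases k <;> simp_all
  | succ n ih =>
    obtain ⟨k, rfl⟩ := Nat.exists_eq_add_one_of_ne_zero (Nat.ne_zero_of_lt h)
    simp [qChoose_succ_succ, ih (show n < k by lia), ih (show n < k + 1 by lia)]

@[simp] lemma qChoose_self (q : R) (n : ℕ) : qChoose q n n = 1 := by
  induction n with
  | zero => simp
  | succ n ih => simp [qChoose_succ_succ, ih, qChoose_eq_zero_of_lt]

lemma qInt_add_pow_mul_qInt_sub_mul_qChoose (q : R) {n k l : ℕ} (h : l ≤ k + 1) :
    (qInt q l + q ^ l * qInt q (n + 1 - l)) * qChoose q n k = qInt q (n + 1) * qChoose q n k := by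
  rcases le_or_gt k n with hkn | hkn
  · rw [← qInt_add, Nat.add_sub_cancel' (by lia)]
  · simp [qChoose_eq_zero_of_lt q hkn]

lemma qInt_mul_qChoose_succ_right (q : R) (n k : ℕ) :
    qInt q (k + 1) * qChoose q n (k + 1) = qInt q (n - k) * qChoose q n k := by
  induction n generalizing k with
  | zero => simp
  | succ n ih =>
    cases k with
    | zero =>
      have hn := qInt_add q 1 n
      have h₀ := ih 0
      simp only [add_comm 1 n, zero_add, qInt_one_right, pow_one, one_mul, Nat.sub_zero,
        qChoose_zero_right, mul_one, qChoose_succ_succ] at hn h₀ ⊢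
      linear_combination q * h₀ - hn
    | succ k =>
      have h₁ := qInt_add_pow_mul_qInt_sub_mul_qChoose q (n := n) (Nat.le_succ (k + 1))
      have h₂ := qInt_add_pow_mul_qInt_sub_mul_qChoose q (n := n) (le_refl (k + 2))
      rw [Nat.add_sub_add_right] at h₁ h₂
      rw [qChoose_succ_succ, qChoose_succ_succ, Nat.add_sub_add_right]
      linear_combination h₂ - h₁ + q ^ (k + 2) * ih (k + 1) + ih k

lemma qInt_mul_qChoose_succ_succ (q : R) (n k : ℕ) :
    qInt q (k + 1) * qChoose q (n + 1) (k + 1) = qInt q (n + 1) * qChoose q n k := by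
  have h := qInt_add_pow_mul_qInt_sub_mul_qChoose q (n := n) (le_refl (k + 1))
  rw [Nat.add_sub_add_right] at h
  rw [qChoose_succ_succ]
  linear_combination h + q ^ (k + 1) * qInt_mul_qChoose_succ_right q n k

end QBinomial

section RootOfUnity

variable {R : Type*} [CommRing R] {ζ : R} {d : ℕ}

lemma qInt_ne_zero_of_not_dvd (h : IsPrimitiveRoot ζ d) {n : ℕ} (hn : ¬ d ∣ n) : qInt ζ n ≠ 0 :=
  fun h₀ ↦ hn (h.dvd_of_pow_eq_one n (pow_eq_one_of_qInt_eq_zero h₀))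

variable [IsDomain R]

lemma qInt_eq_zero_of_dvd (h : IsPrimitiveRoot ζ d) (hd : 1 < d) {n : ℕ} (hn : d ∣ n) :
    qInt ζ n = 0 := by
  have hmul := qInt_mul_sub_one ζ n
  rw [(h.pow_eq_one_iff_dvd n).mpr hn, sub_self] at hmul
  exact (mul_eq_zero.mp hmul).resolve_right (sub_ne_zero.mpr (h.ne_one hd))

lemma qChoose_eq_zero_of_isPrimitiveRoot (h : IsPrimitiveRoot ζ d) {e : ℕ} (he : 0 < e)
    (hed : e < d) : qChoose ζ d e = 0 := by
  obtain ⟨e, rfl⟩ := Nat.exists_eq_add_one_of_ne_zero he.ne'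
  obtain ⟨d, rfl⟩ := Nat.exists_eq_add_one_of_ne_zero (Nat.ne_zero_of_lt hed)
  have hmul := qInt_mul_qChoose_succ_succ ζ d e
  rw [qInt_eq_zero_of_dvd h (by lia) dvd_rfl, zero_mul] at hmul
  exact (mul_eq_zero.mp hmul).resolve_left
    (qInt_ne_zero_of_not_dvd h (Nat.not_dvd_of_pos_of_lt he hed))

lemma qChoose_add_order_of_lt (h : IsPrimitiveRoot ζ d) (n : ℕ) {k : ℕ} (hk : k < d) :
    qChoose ζ (n + d) k = qChoose ζ n k := by
  induction n generalizing k with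
  | zero =>
    rcases k.eq_zero_or_pos with rfl | hk₀
    · simp
    · rw [zero_add, qChoose_eq_zero_of_isPrimitiveRoot h hk₀ hk, qChoose_eq_zero_of_lt ζ hk₀]
  | succ n ih =>
    cases k with
    | zero => simp
    | succ k => rw [Nat.add_right_comm, qChoose_succ_succ, ih hk, ih (by lia), qChoose_succ_succ]

lemma qChoose_add_order_add_order (h : IsPrimitiveRoot ζ d) (hd : 0 < d) (n k : ℕ) :
    qChoose ζ (n + d) (k + d) = qChoose ζ n k + qChoose ζ n (k + d) := by
  induction n generalizing k with
  | zero =>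
    rcases k.eq_zero_or_pos with rfl | hk
    · simp [qChoose_eq_zero_of_lt ζ hd]
    · simp [qChoose_eq_zero_of_lt ζ (show d < k + d by lia), qChoose_eq_zero_of_lt ζ hk,
        qChoose_eq_zero_of_lt ζ (show 0 < k + d by lia)]
  | succ n ih =>
    cases k with
    | zero =>
      obtain ⟨e, rfl⟩ := Nat.exists_eq_add_one_of_ne_zero hd.ne'
      have h₀ := ih 0
      rw [zero_add] at h₀ ⊢
      rw [Nat.add_right_comm, qChoose_succ_succ, qChoose_add_order_of_lt h n (Nat.lt_succ_self e),
        h₀, qChoose_succ_succ ζ n e, h.pow_eq_one, qChoose_zero_right, qChoose_zero_right]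
      ring
    | succ k =>
      rw [Nat.add_right_comm n, Nat.add_right_comm k, qChoose_succ_succ, qChoose_succ_succ,
        qChoose_succ_succ, Nat.add_right_comm k, ih, ih, Nat.add_right_comm k 1 d,
        pow_succ ζ (k + d), pow_add, h.pow_eq_one]
      ring

/-- The `q`-Lucas theorem, with `b < d` relaxed to `b < d + e` to cover the upper index `k + j` in
`qW`, whose last digit may carry. -/
lemma qChoose_mul_add_mul_add (h : IsPrimitiveRoot ζ d) (a c : ℕ) {b e : ℕ} (hb : b < d + e)
    (he : e < d) : qChoose ζ (d * a + b) (d * c + e) = a.choose c * qChoose ζ b e := by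
  induction a generalizing c with
  | zero =>
    cases c with
    | zero => simp
    | succ c => simp [qChoose_eq_zero_of_lt ζ (show b < d * (c + 1) + e by lia)]
  | succ a ih =>
    rw [mul_add_one, add_right_comm]
    cases c with
    | zero => simpa [qChoose_add_order_of_lt h _ he] using ih 0
    | succ c =>
      have hc : d * c + e + d = d * (c + 1) + e := by ring
      rw [← hc, qChoose_add_order_add_order h (by lia), hc, ih, ih, Nat.choose_succ_succ,
        Nat.cast_add, add_mul]

/-- Reflection `u ↦ -1 - u` of the upper index of a `q`-binomial coefficient at a root of unity;
`v` is the representative `d - 1 - u`. -/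
lemma pow_mul_qChoose_eq_neg_one_pow_mul_qChoose (h : IsPrimitiveRoot ζ d) {u v m : ℕ}
    (huv : u + v + 1 = d) (hm : m < d) :
    ζ ^ (v * m + (m + 1).choose 2) * qChoose ζ u m = (-1) ^ m * qChoose ζ (v + m) m := by
  induction m with
  | zero => simp
  | succ m ih =>
    have hm₀ : qInt ζ (m + 1) ≠ 0 :=
      qInt_ne_zero_of_not_dvd h (Nat.not_dvd_of_pos_of_lt m.succ_pos hm)
    have hcompl : ζ ^ (v + m + 1) * qInt ζ (u - m) * qChoose ζ u m =
        -(qInt ζ (v + m + 1) * qChoose ζ u m) := by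
      rcases le_or_gt m u with hmu | hmu
      · have hzero : qInt ζ (v + m + 1 + (u - m)) = 0 := by
          rw [show v + m + 1 + (u - m) = d by lia, qInt_eq_zero_of_dvd h (by lia) dvd_rfl]
        rw [qInt_eq_neg_of_qInt_add_eq_zero hzero]
        ring
      · simp [qChoose_eq_zero_of_lt ζ hmu]
    have hu := qInt_mul_qChoose_succ_right ζ u m
    have hv := qInt_mul_qChoose_succ_succ ζ (v + m) m
    have hexp : v * (m + 1) + (m + 1 + 1).choose 2 =
        v * m + (m + 1).choose 2 + (v + m + 1) := by
      rw [Nat.choose_succ_succ' (m + 1) 1, Nat.choose_one_right]; ring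
    apply mul_left_cancel₀ hm₀
    rw [hexp, pow_add, ← add_assoc v m 1]
    linear_combination ζ ^ (v * m + (m + 1).choose 2) * (ζ ^ (v + m + 1) * hu + hcompl) +
      (-1) ^ m * hv - qInt ζ (v + m + 1) * ih (by lia)

end RootOfUnity

section QAnalogue

variable {R S : Type*} [CommRing R] [CommRing S]

/-- The `q`-analogue of `w k j`. -/
def qW (q : R) (k j : ℕ) : R :=
  qChoose q (k - 1) (j - 1) * qChoose q (k + j) j -
    q * (qChoose q k j * qChoose q (k + j) (j - 1))

/-- The `q`-analogue of `wPoly α k` for `k ≤ N`, summed over `i = j - 1`. The power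
`q ^ ((N - k) * i)` stands for `q ^ (-k * i)`, to which it is equal when `q ^ N = 1`; it makes the
polynomial invariant under reflections of `k`. -/
noncomputable def qWPoly (q : R) (N α k : ℕ) : R[X] :=
  ∑ i ∈ Finset.range N, C ((q ^ ((N - k) * i) * qW q k (i + 1)) ^ α) * X ^ i

/-- The `q`-analogue of `2 * (k * (k + 1) * (k + 2))` for `k ≤ N`, again with `q ^ (-k)` encoded as
`q ^ (N - k)`. -/
def qWeight (q : R) (N k : ℕ) : R :=
  q ^ (2 * (N - k)) * (qInt q k * qInt q (2 * k + 2) * qInt q (k + 2))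

/-- The `q`-analogue of twice the `k`-th summand `k (k + 1) (k + 2) (w_k w_{k+1})^m`. -/
noncomputable def qSummand (q : R) (N α m k : ℕ) : R[X] :=
  C (qWeight q N k) * (qWPoly q N α k * qWPoly q N α (k + 1)) ^ m

lemma map_qW (f : R →+* S) (q : R) (k j : ℕ) : f (qW q k j) = qW (f q) k j := by
  simp [qW, map_qChoose]

lemma map_qWPoly (f : R →+* S) (q : R) (N α k : ℕ) :
    (qWPoly q N α k).map f = qWPoly (f q) N α k := by
  simp only [qWPoly, Polynomial.map_sum, Polynomial.map_mul, Polynomial.map_pow, map_C, map_X]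
  simp only [map_pow f, map_mul f, map_qW f]

lemma map_qWeight (f : R →+* S) (q : R) (N k : ℕ) :
    f (qWeight q N k) = qWeight (f q) N k := by
  simp [qWeight, map_qInt]

lemma map_qSummand (f : R →+* S) (q : R) (N α m k : ℕ) :
    (qSummand q N α m k).map f = qSummand (f q) N α m k := by
  simp only [qSummand, Polynomial.map_mul, Polynomial.map_pow, map_C, map_qWPoly]
  rw [map_qWeight f]

lemma qSummand_eq_zero_of_qWeight_eq_zero (q : R) {N k : ℕ} (α m : ℕ) (hk : qWeight q N k = 0) :
    qSummand q N α m k = 0 := by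
  simp [qSummand, hk]

lemma qW_eq_zero_of_lt (q : R) {k j : ℕ} (hk : 1 ≤ k) (hkj : k < j) : qW q k j = 0 := by
  simp [qW, qChoose_eq_zero_of_lt q hkj, qChoose_eq_zero_of_lt q (show k - 1 < j - 1 by lia)]

lemma qInt_mul_qW_succ_succ (q : R) (k j : ℕ) :
    qInt q (j + 1) * qW q (k + 1) (j + 1) = qChoose q k j * qChoose q (k + j + 2) j := by
  have hright := qInt_mul_qChoose_succ_right q (k + j + 2) j
  have hsucc := qInt_mul_qChoose_succ_succ q k j
  rw [show k + j + 2 - j = 1 + (k + 1) by lia, qInt_add q 1, qInt_one_right, pow_one] at hright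
  rw [qW, Nat.add_sub_cancel, Nat.add_sub_cancel, show k + 1 + (j + 1) = k + j + 2 by ring]
  linear_combination qChoose q k j * hright - q * qChoose q (k + j + 2) j * hsucc

lemma qW_one_left (k j : ℕ) : qW (1 : ℤ) k j = w k j := by
  simp [qW, w, qChoose_one_left]

lemma qWPoly_one_left {α N k : ℕ} (hα : α ≠ 0) (hk : 1 ≤ k) (hkN : k ≤ N) :
    qWPoly (1 : ℤ) N α k = wPoly α k := by
  have hsum : wPoly α k = ∑ i ∈ Finset.range k, C (w k (i + 1) ^ α) * X ^ i := by
    rw [wPoly, ← Finset.Ico_add_one_right_eq_Icc, Finset.sum_Ico_eq_sum_range]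
    simp [add_comm 1]
  simp only [qWPoly, one_pow, one_mul, hsum, qW_one_left]
  refine (Finset.sum_subset (Finset.range_subset_range.mpr hkN) fun i _ hi ↦ ?_).symm
  rw [← qW_one_left, qW_eq_zero_of_lt 1 hk (by simpa [Nat.lt_succ_iff] using hi)]
  simp [hα]

lemma qSummand_one_left {α N k : ℕ} (hα : α ≠ 0) (hkN : k < N) (m : ℕ) :
    qSummand (1 : ℤ) N α m k =
      C ((k : ℤ) * (k + 1) * (k + 2) * 2) * (wPoly α k * wPoly α (k + 1)) ^ m := by
  rcases k.eq_zero_or_pos with rfl | hk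
  · simp [qSummand, qWeight]
  have hweight : qWeight (1 : ℤ) N k = (k : ℤ) * (k + 1) * (k + 2) * 2 := by
    simp [qWeight]
    ring
  rw [qSummand, hweight, qWPoly_one_left hα hk hkN.le, qWPoly_one_left hα k.succ_pos hkN]

end QAnalogue

section Reflection

variable {R : Type*} [CommRing R] {ζ : R} {d : ℕ}

lemma qWeight_eq_neg_of_qInt_eq_zero {N k k' : ℕ} (hk : k ≤ N) (hk' : k' ≤ N)
    (hkk' : qInt ζ (k + k' + 2) = 0) : qWeight ζ N k' = -qWeight ζ N k := by
  have hpow := pow_eq_one_of_qInt_eq_zero hkk'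
  have h₁ : qInt ζ k' = -(ζ ^ k' * qInt ζ (k + 2)) :=
    qInt_eq_neg_of_qInt_add_eq_zero (by rw [← hkk']; congr 1; ring)
  have h₂ : qInt ζ (k' + 2) = -(ζ ^ (k' + 2) * qInt ζ k) :=
    qInt_eq_neg_of_qInt_add_eq_zero (by rw [← hkk']; congr 1; ring)
  have h₃ : qInt ζ (2 * k' + 2) = -(ζ ^ (2 * k' + 2) * qInt ζ (2 * k + 2)) := by
    apply qInt_eq_neg_of_qInt_add_eq_zero
    rw [show 2 * k' + 2 + (2 * k + 2) = (k + k' + 2) + (k + k' + 2) by ring, qInt_add, hkk',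
      mul_zero, add_zero]
  have hexp : ζ ^ (2 * (N - k')) * (ζ ^ k' * ζ ^ (2 * k' + 2) * ζ ^ (k' + 2)) =
      ζ ^ (2 * (N - k)) := by
    rw [← pow_add, ← pow_add, ← pow_add,
      show 2 * (N - k') + (k' + (2 * k' + 2) + (k' + 2)) = 2 * (N - k) + (k + k' + 2) * 2 by lia,
      pow_add, pow_mul ζ (k + k' + 2), hpow, one_pow, mul_one]
  rw [qWeight, qWeight, h₁, h₂, h₃, ← hexp]
  ring

variable [IsDomain R]

lemma qWeight_eq_zero_of_dvd (h : IsPrimitiveRoot ζ d) (hd : 1 < d) (N : ℕ) {k : ℕ}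
    (hk : d ∣ k ∨ d ∣ 2 * k + 2 ∨ d ∣ k + 2) : qWeight ζ N k = 0 := by
  rcases hk with hk | hk | hk <;> simp [qWeight, qInt_eq_zero_of_dvd h hd hk]

lemma qW_mul_add_mul_add_succ (h : IsPrimitiveRoot ζ d) (a c : ℕ) {b m : ℕ} (hb : 1 ≤ b)
    (hbd : b + 1 < d) (hm : m < d) :
    qW ζ (d * a + b) (d * c + m + 1) = a.choose c * (a + c).choose c * qW ζ b (m + 1) := by
  have hk : d * a + b - 1 = d * a + (b - 1) := by lia
  rcases (show m + 1 ≤ d from hm).lt_or_eq with hm' | hm'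
  · have hkj : d * a + b + (d * c + (m + 1)) = d * (a + c) + (b + (m + 1)) := by ring
    rw [qW, qW, Nat.add_sub_cancel, Nat.add_sub_cancel, hk, add_assoc (d * c), hkj]
    iterate 4 rw [qChoose_mul_add_mul_add h _ _ (by lia) (by lia)]
    ring
  · have hkj : d * a + b + (d * c + m + 1) = d * (a + c + 1) + b := by rw [← hm']; ring
    rw [qW_eq_zero_of_lt ζ hb (by lia), qW, Nat.add_sub_cancel, hk, hkj]
    rw [qChoose_mul_add_mul_add h _ _ (by lia) hm, qChoose_mul_add_mul_add h _ _ (by lia) hm,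
      qChoose_eq_zero_of_lt ζ (show b - 1 < m by lia), qChoose_eq_zero_of_lt ζ (show b < m by lia)]
    ring

lemma pow_mul_qW_reflect_of_lt (h : IsPrimitiveRoot ζ d) {b b' m : ℕ} (hb : 1 ≤ b) (hb' : 1 ≤ b')
    (hbb' : b + b' + 1 = d) (hm : m < d) :
    ζ ^ (b' * m) * qW ζ b (m + 1) = ζ ^ (b * m) * qW ζ b' (m + 1) := by
  rcases (show m + 1 ≤ d from hm).lt_or_eq with hm' | hm'
  · obtain ⟨u, rfl⟩ := Nat.exists_eq_add_of_le' hb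
    obtain ⟨u', rfl⟩ := Nat.exists_eq_add_of_le' hb'
    have hu := pow_mul_qChoose_eq_neg_one_pow_mul_qChoose h (u := u) (v := u' + 2) (by lia) hm
    have hu' := pow_mul_qChoose_eq_neg_one_pow_mul_qChoose h (u := u') (v := u + 2) (by lia) hm
    have hW := qInt_mul_qW_succ_succ ζ u m
    have hW' := qInt_mul_qW_succ_succ ζ u' m
    have hm₀ : qInt ζ (m + 1) ≠ 0 :=
      qInt_ne_zero_of_not_dvd h (Nat.not_dvd_of_pos_of_lt m.succ_pos hm')
    have hζ : ζ ^ (m + (m + 1).choose 2) ≠ 0 := pow_ne_zero _ (h.ne_zero (by lia))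
    apply mul_left_cancel₀ (mul_ne_zero hζ hm₀)
    rw [Nat.add_right_comm] at hu hu'
    linear_combination ζ ^ ((u' + 2) * m + (m + 1).choose 2) * hW -
      ζ ^ ((u + 2) * m + (m + 1).choose 2) * hW' + qChoose ζ (u + m + 2) m * hu -
      qChoose ζ (u' + m + 2) m * hu'
  · rw [qW_eq_zero_of_lt ζ hb (by lia), qW_eq_zero_of_lt ζ hb' (by lia), mul_zero, mul_zero]

lemma pow_mul_qW_reflect (h : IsPrimitiveRoot ζ d) (a : ℕ) {b b' : ℕ} (hb : 1 ≤ b) (hb' : 1 ≤ b')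
    (hbb' : b + b' + 1 = d) (i : ℕ) :
    ζ ^ (b' * i) * qW ζ (d * a + b) (i + 1) = ζ ^ (b * i) * qW ζ (d * a + b') (i + 1) := by
  have hm : i % d < d := Nat.mod_lt i (by lia)
  have hpow (b : ℕ) : ζ ^ (b * i) = ζ ^ (b * (i % d)) := by
    rw [mul_comm, mul_comm b, pow_mul, pow_mul, pow_eq_pow_mod i h.pow_eq_one]
  rw [hpow, hpow, ← Nat.div_add_mod i d, qW_mul_add_mul_add_succ h a _ hb (by lia) hm,
    qW_mul_add_mul_add_succ h a _ hb' (by lia) hm, Nat.div_add_mod]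
  linear_combination ((a.choose (i / d) : R) * (a + i / d).choose (i / d)) *
    pow_mul_qW_reflect_of_lt h hb hb' hbb' hm

lemma qWPoly_reflect (h : IsPrimitiveRoot ζ d) {N a b b' : ℕ} (α : ℕ) (hb : 1 ≤ b) (hb' : 1 ≤ b')
    (hbb' : b + b' + 1 = d) (hN : d * a + d ≤ N) :
    qWPoly ζ N α (d * a + b) = qWPoly ζ N α (d * a + b') := by
  refine Finset.sum_congr rfl fun i _ ↦ ?_
  have hsplit : N - (d * a + b) = N - (d * a + d) + 1 + b' := by lia
  have hsplit' : N - (d * a + b') = N - (d * a + d) + 1 + b := by lia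
  rw [hsplit, hsplit', add_mul _ b', add_mul _ b, pow_add, pow_add, mul_assoc, mul_assoc,
    pow_mul_qW_reflect h a hb hb' hbb' i]

lemma qSummand_reflect (h : IsPrimitiveRoot ζ d) (hd : 1 < d) {N a b b' : ℕ} (α m : ℕ)
    (hbb' : b + b' + 2 = d) (hN : d * a + d ≤ N) :
    qSummand ζ N α m (d * a + b) = -qSummand ζ N α m (d * a + b') := by
  have hweight : qWeight ζ N (d * a + b) = -qWeight ζ N (d * a + b') := by
    refine qWeight_eq_neg_of_qInt_eq_zero (by lia) (by lia) (qInt_eq_zero_of_dvd h hd ?_)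
    exact ⟨2 * a + 1, by rw [← hbb']; ring⟩
  by_cases h₀ : b = 0 ∨ b' = 0
  · have hzero : qWeight ζ N (d * a + b) = 0 := by
      refine qWeight_eq_zero_of_dvd h hd N (h₀.imp (fun hb ↦ ?_) fun hb' ↦ .inr ?_)
      · simp [hb]
      · exact ⟨a + 1, by rw [mul_add_one]; lia⟩
    have hzero' : qWeight ζ N (d * a + b') = 0 := by
      rwa [hweight, neg_eq_zero] at hzero
    rw [qSummand_eq_zero_of_qWeight_eq_zero ζ α m hzero,
      qSummand_eq_zero_of_qWeight_eq_zero ζ α m hzero', neg_zero]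
  · have h₁ := qWPoly_reflect h (b := b) (b' := b' + 1) α (by lia) (by lia) (by lia) hN
    have h₂ := qWPoly_reflect h (b := b + 1) (b' := b') α (by lia) (by lia) (by lia) hN
    rw [qSummand, qSummand, hweight, h₁, add_assoc _ b, h₂, C_neg, add_assoc _ b']
    ring

lemma sum_qSummand_block_eq_zero (h : IsPrimitiveRoot ζ d) (hd : 1 < d) {N a : ℕ} (α m : ℕ)
    (hN : d * a + d ≤ N) : ∑ b ∈ Finset.range d, qSummand ζ N α m (d * a + b) = 0 := by
  have hweight {b : ℕ} (hb : d ∣ 2 * b + 2) : qWeight ζ N (d * a + b) = 0 := by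
    refine qWeight_eq_zero_of_dvd h hd N (.inr (.inl ?_))
    rw [show 2 * (d * a + b) + 2 = d * (2 * a) + (2 * b + 2) by ring]
    exact (Nat.dvd_mul_right d _).add hb
  obtain ⟨e, rfl⟩ := Nat.exists_eq_add_one_of_ne_zero (Nat.ne_zero_of_lt hd)
  rw [Finset.sum_range_succ, qSummand_eq_zero_of_qWeight_eq_zero ζ α m (hweight ⟨2, by ring⟩),
    add_zero]
  refine Finset.sum_involution (fun b _ ↦ e - 1 - b) (fun b hb ↦ ?_) (fun b hb hne hfix ↦ hne ?_)
    (fun b hb ↦ ?_) (fun b hb ↦ ?_)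
  all_goals rw [Finset.mem_range] at hb
  · rw [qSummand_reflect h hd α m (show b + (e - 1 - b) + 2 = e + 1 by lia) hN, neg_add_cancel]
  · exact qSummand_eq_zero_of_qWeight_eq_zero ζ α m (hweight ⟨1, by lia⟩)
  · exact Finset.mem_range.mpr (by lia)
  · lia

lemma sum_qSummand_eq_zero (h : IsPrimitiveRoot ζ d) (hd : 1 < d) {N : ℕ} (hdN : d ∣ N)
    (α m : ℕ) : ∑ k ∈ Finset.range N, qSummand ζ N α m k = 0 := by
  have hpartial (M : ℕ) (hM : d * M ≤ N) :
      ∑ k ∈ Finset.range (d * M), qSummand ζ N α m k = 0 := by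
    induction M with
    | zero => simp
    | succ M ih =>
      rw [mul_add_one] at hM ⊢
      rw [Finset.sum_range_add, ih (by lia), sum_qSummand_block_eq_zero h hd α m hM, add_zero]
  obtain ⟨M, rfl⟩ := hdN
  exact hpartial M le_rfl

end Reflection

section Divisibility

lemma qInt_X_dvd_of_aeval_eq_zero {K : Type*} [Field K] [CharZero K] {N : ℕ} (hN : 0 < N)
    {p : ℤ[X]} (hp : ∀ d : ℕ, d ∣ N → 1 < d → ∃ ζ : K, IsPrimitiveRoot ζ d ∧ aeval ζ p = 0) :
    qInt X N ∣ p := by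
  have hpos {d : ℕ} (hd : d ∈ N.divisors.erase 1) : 0 < d :=
    Nat.pos_of_mem_divisors (Finset.mem_of_mem_erase hd)
  rw [qInt, ← prod_cyclotomic_eq_geom_sum hN ℤ]
  refine Finset.prod_dvd_of_isRelPrime (fun i hi j hj hij ↦ ?_) fun d hd ↦ ?_
  · have hi' := cyclotomic.irreducible (hpos hi)
    have hj' := cyclotomic.irreducible (hpos hj)
    rw [Function.onFun, hi'.isRelPrime_iff_not_dvd, hi'.dvd_irreducible_iff_associated hj']
    exact fun hassoc ↦ hij <| cyclotomic_injective <|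
      eq_of_monic_of_associated (cyclotomic.monic i ℤ) (cyclotomic.monic j ℤ) hassoc
  · obtain ⟨hd₁, hdN⟩ := Finset.mem_erase.mp hd
    obtain ⟨ζ, hζ, hpζ⟩ := hp d (Nat.dvd_of_mem_divisors hdN) (by have := hpos hd; lia)
    rw [cyclotomic_eq_minpoly hζ (hpos hd)]
    exact minpoly.isIntegrallyClosed_dvd (hζ.isIntegral (hpos hd)) hpζ

lemma qInt_X_dvd_coeff_sum_qSummand (N α m i : ℕ) :
    qInt X N ∣ (∑ k ∈ Finset.range N, qSummand (X : ℤ[X]) N α m k).coeff i := by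
  rcases N.eq_zero_or_pos with rfl | hN
  · simp
  refine qInt_X_dvd_of_aeval_eq_zero (K := ℂ) hN fun d hdN hd ↦ ?_
  have hζ := Complex.isPrimitiveRoot_exp d (by lia)
  refine ⟨_, hζ, ?_⟩
  rw [← AlgHom.coe_toRingHom, ← coeff_map, Polynomial.map_sum]
  simp only [map_qSummand, RingHom.coe_coe, aeval_X]
  rw [sum_qSummand_eq_zero hζ hd hdN, coeff_zero]

lemma natCast_dvd_sum_range_coeff {α : ℕ} (hα : α ≠ 0) (m i N : ℕ) :
    (N : ℤ) ∣ ∑ k ∈ Finset.range N,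
      ((k : ℤ) * (k + 1) * (k + 2)) * (2 * ((wPoly α k * wPoly α (k + 1)) ^ m).coeff i) := by
  have hdvd := map_dvd (evalRingHom (1 : ℤ)) (qInt_X_dvd_coeff_sum_qSummand N α m i)
  rw [map_qInt, ← coeff_map, Polynomial.map_sum] at hdvd
  simp only [map_qSummand, coe_evalRingHom, eval_X, qInt_one_left] at hdvd
  rw [finsetSum_coeff] at hdvd
  refine hdvd.trans (dvd_of_eq (Finset.sum_congr rfl fun k hk ↦ ?_))
  rw [qSummand_one_left hα (Finset.mem_range.mp hk), coeff_C_mul, mul_assoc]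

lemma mul_add_one_mul_add_two_div_gcd_dvd {n : ℕ} {z : ℤ} (h₀ : (n : ℤ) ∣ z)
    (h₁ : ((n + 1 : ℕ) : ℤ) ∣ z) (h₂ : ((n + 2 : ℕ) : ℤ) ∣ z) :
    ((n * (n + 1) * (n + 2) / Nat.gcd 2 n : ℕ) : ℤ) ∣ z := by
  rw [Int.natCast_dvd] at *
  have hlcm : n * (n + 2) / Nat.gcd 2 n ∣ z.natAbs := by
    simpa [Nat.lcm, Nat.gcd_comm n 2] using Nat.lcm_dvd h₀ h₂
  have hcoprime : (n * (n + 2)).Coprime (n + 1) := by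
    simp [Nat.coprime_mul_iff_left, show n + 2 = n + 1 + 1 by rfl]
  have hgcd : Nat.gcd 2 n ∣ n * (n + 2) := (Nat.gcd_dvd_right 2 n).mul_right _
  rw [mul_right_comm, Nat.mul_div_right_comm hgcd]
  exact (hcoprime.coprime_dvd_left (Nat.div_dvd_of_dvd hgcd)).mul_dvd_of_dvd_of_dvd hlcm h₁

lemma mul_add_one_mul_add_two_div_gcd_dvd_sum_Icc {u : ℕ → ℤ}
    (hu : ∀ N : ℕ, (N : ℤ) ∣ ∑ k ∈ Finset.range N, ((k : ℤ) * (k + 1) * (k + 2)) * u k) (n : ℕ) :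
    ((n * (n + 1) * (n + 2) / Nat.gcd 2 n : ℕ) : ℤ) ∣
      ∑ k ∈ Finset.Icc 1 n, ((k : ℤ) * (k + 1) * (k + 2)) * u k := by
  have hIcc : ∑ k ∈ Finset.Icc 1 n, ((k : ℤ) * (k + 1) * (k + 2)) * u k =
      ∑ k ∈ Finset.range (n + 1), ((k : ℤ) * (k + 1) * (k + 2)) * u k := by
    rw [Finset.range_eq_Ico, Finset.sum_eq_sum_Ico_succ_bot n.add_one_pos, zero_add,
      Finset.Ico_add_one_right_eq_Icc]
    simp
  rw [hIcc]
  refine mul_add_one_mul_add_two_div_gcd_dvd ?_ (hu (n + 1)) ?_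
  · rw [Finset.sum_range_succ]
    exact (hu n).add (Dvd.intro (((n : ℤ) + 1) * (n + 2) * u n) (by ring))
  · have h₂ := hu (n + 2)
    rw [Finset.sum_range_succ] at h₂
    refine (dvd_add_left ?_).mp h₂
    exact Dvd.intro_left (((n : ℤ) + 1) * (n + 3) * u (n + 1)) (by push_cast; ring)

end Divisibility

/-- For all positive integers `α, m, n, r`, `n(n+1)(n+2)/gcd(2,n)` divides every coefficient of
`2·∑_{k=1}^{n} k(k+1)(k+2) (w_k^{(α)}(x) w_{k+1}^{(α)}(x))^m`, i.e.
`2(2,n)/(n(n+1)(n+2))` times this sum lies in `ℤ[x]`. -/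
theorem coeff_dvd_two_mul_sum (α m n r : ℕ) (hα : 1 ≤ α) (hm : 1 ≤ m) (hn : 1 ≤ n) (hr : 1 ≤ r) :
    ∀ i : ℕ, ((n * (n + 1) * (n + 2) / Nat.gcd 2 n : ℕ) : ℤ) ∣
      (2 * ∑ k ∈ Finset.Icc 1 n,
          ((k : ℤ) * ((k : ℤ) + 1) * ((k : ℤ) + 2)) • (wPoly α k * wPoly α (k + 1)) ^ m).coeff i := by
  intro i
  have hcoeff : (2 * ∑ k ∈ Finset.Icc 1 n, ((k : ℤ) * ((k : ℤ) + 1) * ((k : ℤ) + 2)) •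
        (wPoly α k * wPoly α (k + 1)) ^ m).coeff i =
      ∑ k ∈ Finset.Icc 1 n, ((k : ℤ) * (k + 1) * (k + 2)) *
        (2 * ((wPoly α k * wPoly α (k + 1)) ^ m).coeff i) := by
    rw [coeff_ofNat_mul, finsetSum_coeff, Finset.mul_sum]
    exact Finset.sum_congr rfl fun k _ ↦ by rw [coeff_smul, smul_eq_mul]; ring
  rw [hcoeff]
  exact mul_add_one_mul_add_two_div_gcd_dvd_sum_Icc
    (natCast_dvd_sum_range_coeff (Nat.one_le_iff_ne_zero.mp hα) m i) n
end
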